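/- arXiv:1711.09508 — 4 statements merged into one kernel-verified Lean document; each statement's English description precedes it below -/
import Mathlib

section
/- Let ι be a type, A : ι → ℚ a grading function, and C = ι →₀ F[X] the free F[X]-module on ι, with the Alexander grading determined by A. If x ∈ C is homogeneous of some degree s ∈ ℚ and x = (1 + X) • y for some y ∈ C, then x = 0. (This is the algebraic content of Lemma 5.3(1) of the paper: an Alexander-homogeneous chain in the collapsed link Floer chain complex that lies in the kernel of the map setting U = 1 must vanish.) -/
/-!
Each coordinate of an Alexander-homogeneous chain is a monomial. Setting `X = 1` kills every
multiple of `1 + X` in characteristic two, but sends `c * X ^ k` to `c`; likewise, setting `X = a`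
for a non-zero-divisor `a` sends `c * X ^ k` to `c * a ^ k`, which vanishes only if `c` does.
-/

open Polynomial
open scoped nonZeroDivisors

theorem isRoot_monomial_iff_of_mem_nonZeroDivisors {R : Type*} [Semiring R] {a : R} (ha : a ∈ R⁰)
    {k : ℕ} {c : R} : (monomial k c).IsRoot a ↔ c = 0 := by
  rw [IsRoot.def, eval_monomial, mul_right_mem_nonZeroDivisors_eq_zero_iff (pow_mem ha k)]

theorem homogeneous_in_image_one_add_X_eq_zero_general {ι R : Type*} [CommSemiring R] {a : R}
    (ha : a ∈ R⁰) {f : R[X]} (hf : f.IsRoot a) {x y : ι →₀ R[X]}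
    (hmonomial : ∀ i ∈ x.support, ∃ (c : R) (k : ℕ), x i = C c * X ^ k) (hxy : x = f • y) :
    x = 0 := by
  ext1 i
  by_contra hi
  obtain ⟨c, k, hx⟩ := hmonomial i (Finsupp.mem_support_iff.mpr hi)
  rw [C_mul_X_pow_eq_monomial] at hx
  have hdvd : f ∣ x i := ⟨y i, by rw [hxy, Finsupp.smul_apply, smul_eq_mul]⟩
  have hroot : (monomial k c).IsRoot a := hx ▸ hf.dvd hdvd
  have hc : c = 0 := (isRoot_monomial_iff_of_mem_nonZeroDivisors ha).mp hroot
  exact hi (by rw [hx, hc, monomial_zero_right, Finsupp.zero_apply])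

/-- In the free `F[X]`-module `C = ι →₀ F[X]` with Alexander grading
determined by `A : ι → ℚ` (where `X^k • single i 1` has degree `A i - k`),
an element homogeneous of degree `s` that is divisible by `1 + X` must vanish. -/
theorem homogeneous_in_image_one_add_X_eq_zero
    {ι : Type*} (A : ι → ℚ) (s : ℚ)
    (x y : ι →₀ Polynomial (ZMod 2))
    (hhom : ∀ i ∈ x.support, ∃ (c : ZMod 2) (k : ℕ),
      c ≠ 0 ∧ x i = Polynomial.C c * Polynomial.X ^ k ∧ A i - (k : ℚ) = s)
    (hxy : x = (1 + Polynomial.X : Polynomial (ZMod 2)) • y) :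
    x = 0 := by
  have hroot : (1 + X : (ZMod 2)[X]).IsRoot 1 := by simp [CharTwo.add_self_eq_zero]
  exact homogeneous_in_image_one_add_X_eq_zero_general (one_mem _) hroot
    (fun i hi ↦ let ⟨c, k, _, hx, _⟩ := hhom i hi; ⟨c, k, hx⟩) hxy
end

section
/- Let H be a finitely generated graded F[X]-module with X of degree −1 and let T be its torsion submodule. Then the quotient H ⧸ ((1 + X) • H) is a finite-dimensional F-vector space, and its F-dimension equals the rank of the finitely generated torsion-free F[X]-module H ⧸ T (which is free, F[X] being a principal ideal domain). (Dimension form of Theorem 5.4 of the paper.) -/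
/-!
In a graded module on which `X` strictly lowers degrees, a polynomial `p` acts on the component of
highest degree of an element through the constant coefficient `p(0)`; so `p` acts injectively if
`p(0) ≠ 0`. A torsion element generates an Artinian submodule, on which an injective endomorphism is
surjective. Hence `p • H` contains the torsion `T`, and `H ⧸ p • H` is the reduction modulo `p` of
the free module `H ⧸ T`, which has dimension `deg p * rank (H ⧸ T)`. The theorem is the case
`p = 1 + X`.
-/

open Polynomial
open scoped TensorProduct

section Triangular

variable {ι R M : Type*} [DecidableEq ι] [Preorder ι] [Ring R] [AddCommGroup M] [Module R M]
  {ℋ : ι → Submodule R M}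

theorem decompose_apply_eq_zero_of_mem_iSup_lt [DirectSum.Decomposition ℋ] {i j : ι} {x : M}
    (hx : x ∈ ⨆ k < j, ℋ k) (hij : ¬ i < j) : DirectSum.decompose ℋ x i = 0 := by
  have hle : ⨆ k < j, ℋ k ≤ LinearMap.ker
      (DirectSum.component R ι (fun i ↦ ℋ i) i ∘ₗ (DirectSum.decomposeLinearEquiv ℋ).toLinearMap) :=
    iSup₂_le fun k hk y hy ↦ Subtype.ext <|
      DirectSum.decompose_of_mem_ne ℋ hy (ne_of_apply_ne (· < j) (by simp [hk, hij]))
  exact hle hx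

theorem injective_of_sub_smul_mem_iSup_lt (hℋ : DirectSum.IsInternal ℋ) {c : R}
    (hc : IsSMulRegular M c) (f : M →+ M)
    (hf : ∀ i, ∀ x ∈ ℋ i, f x - c • x ∈ ⨆ j < i, ℋ j) : Function.Injective f := by
  classical
  let _ := hℋ.chooseDecomposition
  rw [injective_iff_map_eq_zero]
  intro x hfx
  by_contra hx
  have hsupp : (DirectSum.decompose ℋ x).support.Nonempty := by
    rw [Finset.nonempty_iff_ne_empty, Ne, DFinsupp.support_eq_empty]
    exact fun h ↦ hx ((DirectSum.decomposeAddEquiv ℋ).map_eq_zero_iff.mp h)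
  obtain ⟨i, hi⟩ := Finset.exists_maximal hsupp
  have hsum : f x - c • x =
      ∑ j ∈ (DirectSum.decompose ℋ x).support,
        (f (DirectSum.decompose ℋ x j) - c • (DirectSum.decompose ℋ x j : M)) := by
    rw [Finset.sum_sub_distrib, ← map_sum, ← Finset.smul_sum, DirectSum.sum_support_decompose]
  have hcoeff : DirectSum.decompose ℋ (f x - c • x) i = 0 := by
    rw [hsum, DirectSum.decompose_sum, DFinsupp.finsetSum_apply]
    exact Finset.sum_eq_zero fun j hj ↦ decompose_apply_eq_zero_of_mem_iSup_lt
      (hf j _ (SetLike.coe_mem _)) (hi.not_gt hj)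
  rw [hfx, zero_sub, DirectSum.decompose_neg, DirectSum.decompose_smul] at hcoeff
  have hcxi : c • DirectSum.decompose ℋ x i = 0 := neg_eq_zero.mp hcoeff
  exact DFinsupp.mem_support_iff.mp hi.prop ((hc.submodule (ℋ i)).right_eq_zero_of_smul hcxi)

end Triangular

section GradedPolynomialModule

variable {R M : Type*} [CommRing R] [AddCommGroup M] [Module R M] [Module R[X] M]
  [IsScalarTower R R[X] M]

theorem smul_mem_of_X_smul_mem {N : Submodule R M} (hN : ∀ x ∈ N, (X : R[X]) • x ∈ N) (p : R[X])
    {x : M} (hx : x ∈ N) : p • x ∈ N := by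
  induction p using Polynomial.induction_on generalizing x with
  | C a => simpa only [← algebraMap_eq, algebraMap_smul] using N.smul_mem a hx
  | add p q hp hq => simpa only [add_smul] using N.add_mem (hp hx) (hq hx)
  | monomial n a ih => simpa only [pow_succ, ← mul_assoc, mul_smul] using ih (hN x hx)

variable {ι : Type*} [Preorder ι] {ℋ : ι → Submodule R M}

theorem X_smul_mem_iSup_lt (hX : ∀ i, ∀ x ∈ ℋ i, (X : R[X]) • x ∈ ⨆ j < i, ℋ j) (i : ι) :
    ∀ x ∈ ⨆ j < i, ℋ j, (X : R[X]) • x ∈ ⨆ j < i, ℋ j := by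
  have hle : ⨆ j < i, ℋ j ≤ (⨆ j < i, ℋ j).comap (Algebra.lsmul R R M (X : R[X])) :=
    iSup₂_le fun j hj x hx ↦
      (biSup_mono fun _ hk ↦ hk.trans hj : ⨆ k < j, ℋ k ≤ ⨆ k < i, ℋ k) (hX j x hx)
  exact fun x hx ↦ hle hx

theorem smul_sub_coeff_zero_smul_mem_iSup_lt
    (hX : ∀ i, ∀ x ∈ ℋ i, (X : R[X]) • x ∈ ⨆ j < i, ℋ j) (p : R[X]) {i : ι} {x : M}
    (hx : x ∈ ℋ i) : p • x - p.coeff 0 • x ∈ ⨆ j < i, ℋ j := by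
  have hp : p • x - p.coeff 0 • x = p.divX • (X : R[X]) • x := by
    rw [sub_eq_iff_eq_add, ← mul_smul, ← algebraMap_smul R[X] (p.coeff 0), algebraMap_eq,
      ← add_smul, divX_mul_X_add]
  exact hp ▸ smul_mem_of_X_smul_mem (X_smul_mem_iSup_lt hX i) p.divX (hX i x hx)

theorem isSMulRegular_of_isSMulRegular_coeff_zero [DecidableEq ι] (hℋ : DirectSum.IsInternal ℋ)
    (hX : ∀ i, ∀ x ∈ ℋ i, (X : R[X]) • x ∈ ⨆ j < i, ℋ j) {p : R[X]}
    (hp : IsSMulRegular M (p.coeff 0)) : IsSMulRegular M p :=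
  injective_of_sub_smul_mem_iSup_lt hℋ hp (DistribSMul.toAddMonoidHom M p) fun _ _ ↦
    smul_sub_coeff_zero_smul_mem_iSup_lt hX p

end GradedPolynomialModule

section Torsion

open scoped Pointwise

variable {R M : Type*} [CommRing R] [AddCommGroup M] [Module R M]

variable (M) in
theorem range_lsmul_eq_smul_top (r : R) :
    LinearMap.range (LinearMap.lsmul R M r) = r • (⊤ : Submodule R M) :=
  LinearMap.range_eq_map _

theorem torsion_le_smul_top_of_isSMulRegular [IsNoetherianRing R] [Ring.KrullDimLE 1 R] {r : R}
    (hr : IsSMulRegular M r) : Submodule.torsion R M ≤ r • (⊤ : Submodule R M) := by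
  rintro x ⟨⟨a, ha⟩, hax : a • x = 0⟩
  have hspan : Ideal.span {a} ≤ Ideal.torsionOf R M x := by
    simpa [Ideal.span_singleton_le_iff_mem] using hax
  have : IsArtinian R (R ⧸ Ideal.span {a}) :=
    (isFiniteLength_iff_isNoetherian_isArtinian.mp (isFiniteLength_quotient_span_singleton R ha)).2
  have : IsArtinian R (R ⧸ Ideal.torsionOf R M x) :=
    isArtinian_of_surjective _ (Submodule.factor hspan) (Submodule.factor_surjective hspan)
  have : IsArtinian R (R ∙ x) :=
    isArtinian_of_linearEquiv (Ideal.quotTorsionOfEquivSpanSingleton R M x)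
  obtain ⟨y, hy⟩ := IsArtinian.surjective_of_injective_endomorphism
    (LinearMap.lsmul R (R ∙ x) r) (hr.submodule (R ∙ x)) ⟨x, Submodule.mem_span_singleton_self x⟩
  exact ⟨y, trivial, congrArg Subtype.val hy⟩

/-- The isomorphism `(M ⧸ N) ⧸ r • (M ⧸ N) ≃ M ⧸ r • M` for `N ≤ r • M`: reduction modulo `r` does
not see the submodule `N`. -/
noncomputable def quotSMulTopQuotEquivOfLE {N : Submodule R M} {r : R} (h : N ≤ r • ⊤) :
    QuotSMulTop r (M ⧸ N) ≃ₗ[R] QuotSMulTop r M :=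
  Submodule.quotEquivOfEq _ _ (by
    rw [Submodule.map_pointwise_smul, Submodule.map_top, Submodule.range_mkQ]) ≪≫ₗ
    Submodule.quotientQuotientEquivQuotient N (r • ⊤) h

end Torsion

section Dimension

variable (K : Type*) {R : Type*} (M : Type*) [Field K] [CommRing R] [Algebra K R] [AddCommGroup M]
  [Module R M] [Module K M] [IsScalarTower K R M] (r : R)

theorem finiteDimensional_quotSMulTop [Module.Finite R M]
    [FiniteDimensional K (R ⧸ Ideal.span {r})] : FiniteDimensional K (QuotSMulTop r M) :=
  have : FiniteDimensional K ((R ⧸ Ideal.span {r}) ⊗[R] M) :=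
    Module.Finite.trans (R ⧸ Ideal.span {r}) _
  Module.Finite.equiv ((QuotSMulTop.equivQuotTensor r M).symm.restrictScalars K)

theorem finrank_quotSMulTop_of_free [Nontrivial R] [Module.Finite R M] [Module.Free R M] :
    Module.finrank K (QuotSMulTop r M) =
      Module.finrank K (R ⧸ Ideal.span {r}) * Module.finrank R M := by
  have e := QuotSMulTop.equivQuotTensor r M ≪≫ₗ
    TensorProduct.equivFinsuppOfBasisRight (Module.Free.chooseBasis R M)
  rw [(e.restrictScalars K).finrank_eq, Module.finrank_eq_card_chooseBasisIndex R M]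
  simp [Module.finrank, mul_comm]

variable {M} in
theorem finrank_quotSMulTop_of_isSMulRegular [IsDomain R] [IsPrincipalIdealRing R]
    [Module.Finite R M] {r : R} (hr : IsSMulRegular M r) :
    Module.finrank K (QuotSMulTop r M) =
      Module.finrank K (R ⧸ Ideal.span {r}) * Module.finrank R (M ⧸ Submodule.torsion R M) := by
  have hT := torsion_le_smul_top_of_isSMulRegular hr
  rw [← ((quotSMulTopQuotEquivOfLE hT).restrictScalars K).finrank_eq, finrank_quotSMulTop_of_free]

end Dimension

theorem finrank_quotient_one_add_X_eq_rank_torsionFree_general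
    {ι K H : Type*} [DecidableEq ι] [Preorder ι] [Field K] [AddCommGroup H] [Module K[X] H]
    [Module K H] [IsScalarTower K K[X] H] [Module.Finite K[X] H]
    {ℋ : ι → Submodule K H} (hinternal : DirectSum.IsInternal ℋ)
    (hdeg : ∀ i, ∀ h ∈ ℋ i, (X : K[X]) • h ∈ ⨆ j < i, ℋ j) {p : K[X]} (hp : p.coeff 0 ≠ 0) :
    FiniteDimensional K (H ⧸ LinearMap.range (LinearMap.lsmul K[X] H p)) ∧
    Module.finrank K (H ⧸ LinearMap.range (LinearMap.lsmul K[X] H p)) =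
      p.natDegree * Module.finrank K[X] (H ⧸ Submodule.torsion K[X] H) := by
  have hreg : IsSMulRegular H p :=
    isSMulRegular_of_isSMulRegular_coeff_zero hinternal hdeg (IsSMulRegular.of_ne_zero hp)
  have hp0 : p ≠ 0 := fun h ↦ hp (by simp [h])
  have : FiniteDimensional K (K[X] ⧸ Ideal.span {p}) := (AdjoinRoot.powerBasis hp0).finite
  rw [range_lsmul_eq_smul_top]
  refine ⟨finiteDimensional_quotSMulTop K H p, ?_⟩
  rw [← finrank_quotient_span_eq_natDegree]
  exact finrank_quotSMulTop_of_isSMulRegular K hreg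

/-- For a finitely generated graded `F[X]`-module `H` with `X` of degree `-1`,
the quotient `H ⧸ (1+X)•H` is a finite-dimensional `F`-vector space whose dimension equals
the rank of the free `F[X]`-module `H ⧸ T`, `T` the torsion submodule. -/
theorem finrank_quotient_one_add_X_eq_rank_torsionFree
    {H : Type*} [AddCommGroup H] [Module (Polynomial (ZMod 2)) H]
    [Module (ZMod 2) H] [IsScalarTower (ZMod 2) (Polynomial (ZMod 2)) H]
    [Module.Finite (Polynomial (ZMod 2)) H]
    (ℋ : ℚ → Submodule (ZMod 2) H)
    (hinternal : DirectSum.IsInternal ℋ)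
    (hdeg : ∀ (s : ℚ) (h : H), h ∈ ℋ s →
      (Polynomial.X : Polynomial (ZMod 2)) • h ∈ ℋ (s - 1)) :
    FiniteDimensional (ZMod 2)
      (H ⧸ LinearMap.range
        (LinearMap.lsmul (Polynomial (ZMod 2)) H (1 + Polynomial.X))) ∧
    Module.finrank (ZMod 2)
      (H ⧸ LinearMap.range
        (LinearMap.lsmul (Polynomial (ZMod 2)) H (1 + Polynomial.X))) =
    Module.finrank (Polynomial (ZMod 2))
      (H ⧸ Submodule.torsion (Polynomial (ZMod 2)) H) := by
  have hlower (s : ℚ) (h : H) (hh : h ∈ ℋ s) : (X : (ZMod 2)[X]) • h ∈ ⨆ t < s, ℋ t :=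
    Submodule.mem_iSup_of_mem (s - 1) (Submodule.mem_iSup_of_mem (sub_one_lt s) (hdeg s h hh))
  obtain ⟨hfin, hrank⟩ := finrank_quotient_one_add_X_eq_rank_torsionFree_general hinternal hlower
    (p := 1 + X) (by simp)
  exact ⟨hfin, hrank.trans (by rw [add_comm 1 X, ← C_1, natDegree_X_add_C, one_mul])⟩
end

section
/- Let H be a graded F[X]-module with X of degree −1. Then every torsion element of H is divisible by 1 + X: if x ∈ H satisfies p • x = 0 for some nonzero polynomial p ∈ F[X], then there exists y ∈ H with x = (1 + X) • y. (Intermediate claim needed for the surjectivity part of Theorem 5.4 of the paper.) -/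
/-!
Filter the module by the submodules `⨆ i ≤ s, ℋ i`. Multiplication by `X` strictly lowers this
filtration, while a nonzero element has a top degree, so no nonzero `h` is of the form `X • a • h`.
If `r` is coprime to `X`, say `a * X + b * r = 1`, then `r • h = 0` gives `h = X • a • h`; hence
`r` acts injectively. An annihilator of `x` has the form `X ^ n * r` with `r` coprime to `X`, so
already `X ^ n • x = 0`, and `x` is divisible by every polynomial coprime to `X`.
-/

open Polynomial

theorem isCoprime_X_iff_isUnit_coeff_zero {R : Type*} [CommRing R] {p : R[X]} :
    IsCoprime X p ↔ IsUnit (p.coeff 0) := by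
  refine ⟨fun h ↦ ?_, fun h ↦ ?_⟩
  · have hmap : IsCoprime 0 (p.coeff 0) := by simpa using h.map constantCoeff
    exact isCoprime_zero_left.mp hmap
  · have hC : IsCoprime X (C (p.coeff 0)) :=
      isCoprime_one_right.of_isCoprime_of_dvd_right (isUnit_C.mpr h).dvd
    rw [← divX_mul_X_add p]
    exact hC.mul_add_right_right p.divX

theorem exists_eq_X_pow_natTrailingDegree_mul {R : Type*} [Semiring R] (p : R[X]) :
    ∃ r : R[X], p = X ^ p.natTrailingDegree * r ∧ r.coeff 0 = p.trailingCoeff := by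
  obtain ⟨r, hr⟩ : X ^ p.natTrailingDegree ∣ p :=
    X_pow_dvd_iff.mpr fun _ ↦ coeff_eq_zero_of_lt_natTrailingDegree
  refine ⟨r, hr, ?_⟩
  calc r.coeff 0 = (X ^ p.natTrailingDegree * r).coeff (0 + p.natTrailingDegree) :=
        (coeff_X_pow_mul r _ 0).symm
    _ = p.trailingCoeff := by rw [← hr, zero_add, trailingCoeff]

theorem exists_smul_smul_eq_of_isCoprime {R M : Type*} [CommSemiring R] [AddCommMonoid M]
    [Module R M] {p q : R} (hpq : IsCoprime p q) {x : M} (hx : p • x = 0) :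
    ∃ a : R, q • a • x = x := by
  obtain ⟨b, a, hab⟩ := hpq
  refine ⟨a, ?_⟩
  calc q • a • x = b • p • x + a • q • x := by rw [hx, smul_zero, zero_add, smul_comm]
    _ = x := by rw [← mul_smul, ← mul_smul, ← add_smul, hab, one_smul]

theorem polynomial_smul_mem_of_X_smul_mem {R M : Type*} [Semiring R] [AddCommMonoid M]
    [Module R M] [Module R[X] M] [IsScalarTower R R[X] M] {N : Submodule R M}
    (hN : ∀ m ∈ N, (X : R[X]) • m ∈ N) (p : R[X]) {m : M} (hm : m ∈ N) : p • m ∈ N := by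
  induction p using Polynomial.induction_on generalizing m with
  | C a =>
    rw [← mul_one (C a), ← smul_eq_C_mul, smul_assoc, one_smul]
    exact N.smul_mem a hm
  | add p q hp hq => simpa only [add_smul] using N.add_mem (hp hm) (hq hm)
  | monomial n a ih =>
    rw [pow_succ, ← mul_assoc, mul_smul]
    exact ih (hN m hm)

theorem X_smul_mem_iSup_lt_of_mem_iSup_le {R ι M : Type*} [CommSemiring R] [Preorder ι]
    [AddCommMonoid M] [Module R M] [Module R[X] M] [IsScalarTower R R[X] M] {ℋ : ι → Submodule R M}
    (hX : ∀ i, ∀ m ∈ ℋ i, (X : R[X]) • m ∈ ⨆ j < i, ℋ j) {s : ι} {m : M}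
    (hm : m ∈ ⨆ i ≤ s, ℋ i) : (X : R[X]) • m ∈ ⨆ i < s, ℋ i := by
  have hle : ⨆ i ≤ s, ℋ i ≤ (⨆ i < s, ℋ i).comap (Algebra.lsmul R R M (X : R[X])) :=
    iSup₂_le fun i hi m hm ↦
      (biSup_mono fun _ hj ↦ hj.trans_le hi : ⨆ j < i, ℋ j ≤ ⨆ j < s, ℋ j) (hX i m hm)
  exact hle hm

theorem exists_mem_iSup_le_and_notMem_iSup_lt {R ι M : Type*} [Ring R] [LinearOrder ι]
    [AddCommGroup M] [Module R M] {ℋ : ι → Submodule R M} (hℋ : iSupIndep ℋ) {h : M}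
    (hmem : h ∈ ⨆ i, ℋ i) (hne : h ≠ 0) :
    ∃ s, h ∈ ⨆ i ≤ s, ℋ i ∧ h ∉ ⨆ i < s, ℋ i := by
  obtain ⟨f, hf, rfl⟩ := (Submodule.mem_iSup_iff_exists_finsupp ℋ h).mp hmem
  have hsupp : f.support.Nonempty := by
    rw [Finsupp.support_nonempty_iff]
    rintro rfl
    exact hne Finsupp.sum_zero_index
  set s := f.support.max' hsupp
  have hs : s ∈ f.support := f.support.max'_mem hsupp
  have hle_s : ∀ i ∈ f.support, i ≤ s := f.support.le_max'
  have hlt_s : ∀ i ∈ f.support.erase s, i < s := fun _ ↦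
    f.support.lt_max'_of_mem_erase_max' hsupp
  refine ⟨s, Submodule.sum_mem _ fun i hi ↦
    Submodule.mem_iSup_of_mem i (Submodule.mem_iSup_of_mem (hle_s i hi) (hf i)), fun hlt ↦ ?_⟩
  have hrest : ∑ i ∈ f.support.erase s, f i ∈ ⨆ i < s, ℋ i :=
    Submodule.sum_mem _ fun i hi ↦
      Submodule.mem_iSup_of_mem i (Submodule.mem_iSup_of_mem (hlt_s i hi) (hf i))
  have htop_lt : f s ∈ ⨆ i < s, ℋ i := by
    rw [Finsupp.sum, ← Finset.add_sum_erase _ _ hs] at hlt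
    exact (Submodule.add_mem_iff_left _ hrest).mp hlt
  have htop_ne : f s ∈ ⨆ i ≠ s, ℋ i :=
    (biSup_mono fun _ ↦ ne_of_lt : ⨆ i < s, ℋ i ≤ ⨆ i ≠ s, ℋ i) htop_lt
  exact Finsupp.mem_support_iff.mp hs (Submodule.disjoint_def.mp (hℋ s) _ (hf s) htop_ne)

section XLowersDegree

variable {R ι H : Type*} [CommRing R] [LinearOrder ι] [AddCommGroup H] [Module R H]
  [Module R[X] H] [IsScalarTower R R[X] H] {ℋ : ι → Submodule R H}

theorem eq_zero_of_smul_eq_zero_of_isCoprime_X (hℋ : DirectSum.IsInternal ℋ)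
    (hX : ∀ i, ∀ h ∈ ℋ i, (X : R[X]) • h ∈ ⨆ j < i, ℋ j) {r : R[X]} (hr : IsCoprime X r) {h : H}
    (hrh : r • h = 0) : h = 0 := by
  by_contra hne
  have hmem : h ∈ ⨆ i, ℋ i := hℋ.submodule_iSup_eq_top ▸ Submodule.mem_top
  obtain ⟨s, hle, hlt⟩ :=
    exists_mem_iSup_le_and_notMem_iSup_lt hℋ.submodule_iSupIndep hmem hne
  obtain ⟨a, ha⟩ := exists_smul_smul_eq_of_isCoprime hr.symm hrh
  have hstable : ∀ m ∈ ⨆ i ≤ s, ℋ i, (X : R[X]) • m ∈ ⨆ i ≤ s, ℋ i := fun m hm ↦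
    (biSup_mono fun _ ↦ le_of_lt : ⨆ i < s, ℋ i ≤ ⨆ i ≤ s, ℋ i)
      (X_smul_mem_iSup_lt_of_mem_iSup_le hX hm)
  have hah : a • h ∈ ⨆ i ≤ s, ℋ i := polynomial_smul_mem_of_X_smul_mem hstable a hle
  exact hlt (ha ▸ X_smul_mem_iSup_lt_of_mem_iSup_le hX hah)

theorem X_pow_natTrailingDegree_smul_eq_zero (hℋ : DirectSum.IsInternal ℋ)
    (hX : ∀ i, ∀ h ∈ ℋ i, (X : R[X]) • h ∈ ⨆ j < i, ℋ j) {p : R[X]}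
    (hp : IsUnit p.trailingCoeff) {x : H} (hpx : p • x = 0) :
    (X : R[X]) ^ p.natTrailingDegree • x = 0 := by
  obtain ⟨r, hpr, hr⟩ := exists_eq_X_pow_natTrailingDegree_mul p
  have hXr : IsCoprime X r := isCoprime_X_iff_isUnit_coeff_zero.mpr (hr ▸ hp)
  rw [hpr, mul_comm, mul_smul] at hpx
  exact eq_zero_of_smul_eq_zero_of_isCoprime_X hℋ hX hXr hpx

theorem torsion_divisible_by_one_add_X_general (hℋ : DirectSum.IsInternal ℋ)
    (hX : ∀ i, ∀ h ∈ ℋ i, (X : R[X]) • h ∈ ⨆ j < i, ℋ j) {p q : R[X]}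
    (hp : IsUnit p.trailingCoeff) (hq : IsCoprime X q) {x : H} (hpx : p • x = 0) :
    ∃ y : H, x = q • y := by
  have hXx := X_pow_natTrailingDegree_smul_eq_zero hℋ hX hp hpx
  obtain ⟨a, ha⟩ := exists_smul_smul_eq_of_isCoprime hq.pow_left hXx
  exact ⟨a • x, ha.symm⟩

end XLowersDegree

/-- In a graded `F[X]`-module with `X` of degree `-1`, every torsion element
is divisible by `1 + X`. -/
theorem torsion_divisible_by_one_add_X
    {H : Type*} [AddCommGroup H] [Module (Polynomial (ZMod 2)) H]
    [Module (ZMod 2) H] [IsScalarTower (ZMod 2) (Polynomial (ZMod 2)) H]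
    (ℋ : ℚ → Submodule (ZMod 2) H)
    (hinternal : DirectSum.IsInternal ℋ)
    (hdeg : ∀ (s : ℚ) (h : H), h ∈ ℋ s →
      (Polynomial.X : Polynomial (ZMod 2)) • h ∈ ℋ (s - 1))
    (x : H) (p : Polynomial (ZMod 2)) (hp : p ≠ 0) (hpx : p • x = 0) :
    ∃ y : H, x = (1 + Polynomial.X : Polynomial (ZMod 2)) • y :=
  torsion_divisible_by_one_add_X_general hinternal
    (fun s h hh ↦ Submodule.mem_iSup_of_mem (s - 1)
      (Submodule.mem_iSup_of_mem (sub_one_lt s) (hdeg s h hh)))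
    (isUnit_iff_ne_zero.mpr (trailingCoeff_nonzero_iff_nonzero.mpr hp))
    (isCoprime_X_iff_isUnit_coeff_zero.mpr (by simp)) hpx
end

section
/- Let H be a graded F[X]-module with X of degree −1 which is finitely generated over F[X] and in which every element is torsion (for each x ∈ H there is a nonzero p ∈ F[X] with p • x = 0). Then there exists N ∈ ℕ such that X^N • x = 0 for every x ∈ H. (Uniform version, for the torsion part of cHFL⁻, of the paper's observation that torsion classes are killed by powers of U; it fails without the grading hypothesis, e.g. for F[X]/(1+X).) -/
/-!
A homogeneous element `x` of degree `i` is killed by some `p ≠ 0`. The terms `aₖ Xᵏ • x` of `p • x`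
lie in the pairwise distinct degrees `i + k • d`, so each of them vanishes separately, and the
leading one shows that a power of `X` kills `x`, as the leading coefficient acts injectively. Being
killed by a power of `X` passes to sums, hence to all of `M`, and finitely many generators give a
common exponent.
-/

open Polynomial

section PowSMul

theorem pow_smul_mem_add_nsmul {A M S ι : Type*} [Monoid A] [MulAction A M] [SetLike S M]
    [AddMonoid ι] {ℳ : ι → S} {a : A} {d : ι} (ha : ∀ i, ∀ x ∈ ℳ i, a • x ∈ ℳ (i + d))
    {i : ι} {x : M} (hx : x ∈ ℳ i) (k : ℕ) : a ^ k • x ∈ ℳ (i + k • d) := by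
  induction k with
  | zero => simpa using hx
  | succ k ih => simpa only [pow_succ', mul_smul, succ_nsmul, add_assoc] using ha _ _ ih

theorem exists_pow_smul_eq_zero_of_iSup_eq_top {A R M ι : Type*} [CommMonoid A]
    [CommSemiring R] [AddCommMonoid M] [DistribMulAction A M] [Module R M] [SMulCommClass A R M]
    {ℳ : ι → Submodule R M} (hℳ : ⨆ i, ℳ i = ⊤) {a : A}
    (ha : ∀ i, ∀ x ∈ ℳ i, ∃ n : ℕ, a ^ n • x = 0) (x : M) : ∃ n : ℕ, a ^ n • x = 0 := by
  have hle : ⨆ i, ℳ i ≤ Submodule.torsion' R M (Submonoid.powers a) := iSup_le fun i y hy ↦ by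
    obtain ⟨n, hn⟩ := ha i y hy
    exact ⟨⟨a ^ n, n, rfl⟩, hn⟩
  obtain ⟨⟨_, n, rfl⟩, hn⟩ := hle (hℳ ▸ Submodule.mem_top : x ∈ ⨆ i, ℳ i)
  exact ⟨n, hn⟩

theorem exists_forall_pow_smul_eq_zero_of_finite {A M : Type*} [CommSemiring A] [AddCommMonoid M]
    [Module A M] [Module.Finite A M] {a : A} (ha : ∀ x : M, ∃ n : ℕ, a ^ n • x = 0) :
    ∃ N : ℕ, ∀ x : M, a ^ N • x = 0 := by
  have hnil : IsNilpotent (algebraMap A (Module.End A M) a) :=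
    Module.End.isNilpotent_iff_of_finite.mpr <| by
      simpa only [← map_pow, Module.algebraMap_end_apply] using ha
  obtain ⟨N, hN⟩ := hnil
  rw [← map_pow] at hN
  exact ⟨N, LinearMap.congr_fun hN⟩

end PowSMul

section GradedPolynomialModule

theorem smul_eq_sum_coeff_smul_X_pow_smul {R M : Type*} [Semiring R] [AddCommMonoid M] [Module R M]
    [Module R[X] M] [IsScalarTower R R[X] M] (p : R[X]) (x : M) :
    p • x = ∑ k ∈ p.support, p.coeff k • (X : R[X]) ^ k • x := by
  conv_lhs => rw [p.as_sum_support_C_mul_X_pow, Finset.sum_smul]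
  simp only [← smul_eq_C_mul, smul_assoc]

variable {R M ι : Type*} [AddCommGroup M] [AddLeftCancelMonoid ι] {d : ι}

theorem coeff_smul_X_pow_smul_eq_zero [Ring R] [Module R M] [Module R[X] M] [IsScalarTower R R[X] M]
    {ℳ : ι → Submodule R M} (hℳ : iSupIndep ℳ) (hd : ¬IsOfFinAddOrder d)
    (hX : ∀ i, ∀ x ∈ ℳ i, (X : R[X]) • x ∈ ℳ (i + d)) {i : ι} {x : M} (hx : x ∈ ℳ i)
    {p : R[X]} (hp : p • x = 0) (k : ℕ) : p.coeff k • (X : R[X]) ^ k • x = 0 := by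
  by_cases hk : k ∈ p.support
  · have hinj : Function.Injective fun n : ℕ ↦ i + n • d :=
      (add_right_injective i).comp (injective_nsmul_iff_not_isOfFinAddOrder.mpr hd)
    rw [smul_eq_sum_coeff_smul_X_pow_smul] at hp
    exact (iSupIndep_iff_finsetSum_eq_zero_imp_eq_zero _).mp (hℳ.comp hinj) p.support _
      (fun n _ ↦ (ℳ _).smul_mem _ (pow_smul_mem_add_nsmul hX hx n)) hp k hk
  · rw [notMem_support_iff.mp hk, zero_smul]

theorem exists_X_pow_smul_eq_zero_of_mem [Ring R] [NoZeroDivisors R] [Module R M]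
    [Module.IsTorsionFree R M] [Module R[X] M] [IsScalarTower R R[X] M]
    {ℳ : ι → Submodule R M} (hℳ : iSupIndep ℳ) (hd : ¬IsOfFinAddOrder d)
    (hX : ∀ i, ∀ x ∈ ℳ i, (X : R[X]) • x ∈ ℳ (i + d)) {i : ι} {x : M} (hx : x ∈ ℳ i)
    {p : R[X]} (hp : p ≠ 0) (hpx : p • x = 0) : ∃ n : ℕ, (X : R[X]) ^ n • x = 0 :=
  ⟨p.natDegree, (smul_eq_zero_iff_right (leadingCoeff_ne_zero.mpr hp)).mp
    (coeff_smul_X_pow_smul_eq_zero hℳ hd hX hx hpx p.natDegree)⟩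

theorem torsion_module_killed_by_uniform_X_pow_general [DecidableEq ι] [CommRing R]
    [NoZeroDivisors R] [Module R M] [Module.IsTorsionFree R M] [Module R[X] M]
    [IsScalarTower R R[X] M] [Module.Finite R[X] M] (ℳ : ι → Submodule R M)
    (hℳ : DirectSum.IsInternal ℳ) (hd : ¬IsOfFinAddOrder d)
    (hX : ∀ i, ∀ x ∈ ℳ i, (X : R[X]) • x ∈ ℳ (i + d))
    (htor : ∀ x : M, ∃ p : R[X], p ≠ 0 ∧ p • x = 0) :
    ∃ N : ℕ, ∀ x : M, (X : R[X]) ^ N • x = 0 := by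
  have hhom : ∀ i, ∀ x ∈ ℳ i, ∃ n : ℕ, (X : R[X]) ^ n • x = 0 := fun i x hx ↦ by
    obtain ⟨p, hp, hpx⟩ := htor x
    exact exists_X_pow_smul_eq_zero_of_mem hℳ.submodule_iSupIndep hd hX hx hp hpx
  exact exists_forall_pow_smul_eq_zero_of_finite
    (exists_pow_smul_eq_zero_of_iSup_eq_top hℳ.submodule_iSup_eq_top hhom)

end GradedPolynomialModule

/-- A finitely generated graded `F[X]`-module with `X` of degree `-1`, all of
whose elements are torsion, is uniformly annihilated by a power of `X`. -/
theorem torsion_module_killed_by_uniform_X_pow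
    {H : Type*} [AddCommGroup H] [Module (Polynomial (ZMod 2)) H]
    [Module (ZMod 2) H] [IsScalarTower (ZMod 2) (Polynomial (ZMod 2)) H]
    [Module.Finite (Polynomial (ZMod 2)) H]
    (ℋ : ℚ → Submodule (ZMod 2) H)
    (hinternal : DirectSum.IsInternal ℋ)
    (hdeg : ∀ (s : ℚ) (h : H), h ∈ ℋ s →
      (Polynomial.X : Polynomial (ZMod 2)) • h ∈ ℋ (s - 1))
    (htor : ∀ x : H, ∃ p : Polynomial (ZMod 2), p ≠ 0 ∧ p • x = 0) :
    ∃ N : ℕ, ∀ x : H, (Polynomial.X : Polynomial (ZMod 2)) ^ N • x = 0 :=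
  torsion_module_killed_by_uniform_X_pow_general ℋ hinternal (d := -1)
    (not_isOfFinAddOrder_of_isAddTorsionFree (by norm_num))
    (by simpa only [← sub_eq_add_neg] using hdeg) htor
end
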